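/- arXiv:2306.08410 — 3 statements merged into one kernel-verified Lean document; each statement's English description precedes it below -/
import Mathlib

section
/- For all integers l ≥ 0 and n ≥ l, the characters of finite Fibonacci-l configurations satisfy the recurrence χ^l_{n+1}(z,q) = χ^l_n(z,q) + z·q^n·χ^l_{n-l}(z,q) in the polynomial ring ℤ[z,q]. -/
/-- The set of finite Fibonacci-`l` configurations on `n` points: functions
`a : {0,…,n-1} → {0,1}` (encoded as `Fin n → Bool`) such that `a i + a j ≤ 1`
whenever `1 ≤ |i - j| ≤ l`. -/
def fibSet (l n : ℕ) : Finset (Fin n → Bool) :=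
  Finset.univ.filter fun a =>
    ∀ i j : Fin n, (i : ℕ) < (j : ℕ) → (j : ℕ) ≤ (i : ℕ) + l →
      ¬(a i = true ∧ a j = true)

/-- The character `χ^l_n(z,q) = Σ_{a ∈ Fib^l_n} z^{a_0+⋯+a_{n-1}} q^{0·a_0+⋯+(n-1)·a_{n-1}}`
as an element of `ℤ[z,q]`, where `z = X 0` and `q = X 1`. -/
noncomputable def fibChar (l n : ℕ) : MvPolynomial (Fin 2) ℤ :=
  ∑ a ∈ fibSet l n,
    MvPolynomial.X 0 ^ (Finset.univ.filter fun i => a i = true).card *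
      MvPolynomial.X 1 ^ (∑ i ∈ Finset.univ.filter (fun i => a i = true), (i : ℕ))

/-!
A configuration is determined by its support, a set of naturals below `n` whose elements are more
than `l` apart. Among such sets below `n + 1`, those avoiding `n` are the ones below `n`, while
those containing `n` have all their other elements below `n - l`, and these elements may form any
set of the same kind. Removing `n` costs a factor `z * q ^ n`.
-/

open Finset MvPolynomial

section SparseSubsets

/-- The Fibonacci-`l` condition on the support of a configuration: distinct elements are more than
`l` apart. -/
def IsSparse (l : ℕ) (S : Finset ℕ) : Prop :=
  ∀ i ∈ S, ∀ j ∈ S, i < j → i + l < j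

instance (l : ℕ) : DecidablePred (IsSparse l) := fun S =>
  inferInstanceAs (Decidable (∀ i ∈ S, ∀ j ∈ S, i < j → i + l < j))

/-- The possible supports of Fibonacci-`l` configurations on `n` points, encoded as subsets of `ℕ`
so that supports for different values of `n` can be compared. -/
def sparseSubsets (l n : ℕ) : Finset (Finset ℕ) :=
  {S ∈ (range n).powerset | IsSparse l S}

variable {l n : ℕ} {S : Finset ℕ}

theorem mem_sparseSubsets : S ∈ sparseSubsets l n ↔ (∀ i ∈ S, i < n) ∧ IsSparse l S := by
  simp [sparseSubsets, subset_iff]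

theorem isSparse_insert (hS : ∀ i ∈ S, i < n) :
    IsSparse l (insert n S) ↔ IsSparse l S ∧ ∀ i ∈ S, i + l < n := by
  simp only [IsSparse, forall_mem_insert]
  constructor
  · rintro ⟨-, hgap⟩
    exact ⟨fun i hi => (hgap i hi).2, fun i hi => (hgap i hi).1 (hS i hi)⟩
  · rintro ⟨hgap, hlast⟩
    exact ⟨⟨fun h => absurd h n.lt_irrefl, fun j hj h => absurd h (hS j hj).not_gt⟩,
      fun i hi => ⟨fun _ => hlast i hi, hgap i hi⟩⟩

theorem filter_isSparse_insert (l m : ℕ) :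
    {S ∈ (range (m + l)).powerset | IsSparse l (insert (m + l) S)} = sparseSubsets l m := by
  ext S
  simp only [mem_filter, mem_powerset, subset_iff, mem_range, mem_sparseSubsets]
  constructor
  · rintro ⟨hS, hsparse⟩
    obtain ⟨hsparse, hlast⟩ := (isSparse_insert hS).mp hsparse
    exact ⟨fun i hi => Nat.lt_of_add_lt_add_right (hlast i hi), hsparse⟩
  · rintro ⟨hS, hsparse⟩
    have hlt : ∀ i ∈ S, i < m + l := fun i hi => Nat.lt_add_right l (hS i hi)
    exact ⟨hlt, (isSparse_insert hlt).mpr ⟨hsparse, fun i hi => Nat.add_lt_add_right (hS i hi) l⟩⟩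

theorem sum_sparseSubsets_succ {M : Type*} [AddCommMonoid M] (f : Finset ℕ → M) (l m : ℕ) :
    ∑ S ∈ sparseSubsets l (m + l + 1), f S =
      ∑ S ∈ sparseSubsets l (m + l), f S + ∑ S ∈ sparseSubsets l m, f (insert (m + l) S) := by
  rw [← filter_isSparse_insert l m, sparseSubsets, sparseSubsets, sum_filter, range_add_one,
    sum_powerset_insert notMem_range_self, ← sum_filter, ← sum_filter]

end SparseSubsets

section Support

/-- The support of a configuration, as a set of natural numbers. -/
def configSupport {n : ℕ} (a : Fin n → Bool) : Finset ℕ :=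
  (univ.filter fun i => a i = true).map Fin.valEmbedding

variable {l n : ℕ} {a : Fin n → Bool}

theorem val_mem_configSupport {i : Fin n} : (i : ℕ) ∈ configSupport a ↔ a i = true := by
  simp [configSupport, Fin.val_inj]

theorem lt_of_mem_configSupport {k : ℕ} (hk : k ∈ configSupport a) : k < n := by
  obtain ⟨i, -, rfl⟩ := mem_map.mp hk
  exact i.isLt

theorem configSupport_mem_sparseSubsets : configSupport a ∈ sparseSubsets l n ↔ a ∈ fibSet l n := by
  simp only [mem_sparseSubsets, IsSparse, fibSet, mem_filter, mem_univ, true_and]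
  constructor
  · rintro ⟨-, hgap⟩ i j hij hjl ⟨hi, hj⟩
    exact hjl.not_gt (hgap i (val_mem_configSupport.mpr hi) j (val_mem_configSupport.mpr hj) hij)
  · refine fun ha => ⟨fun k hk => lt_of_mem_configSupport hk, fun i hi j hj hij => ?_⟩
    lift i to Fin n using lt_of_mem_configSupport hi
    lift j to Fin n using lt_of_mem_configSupport hj
    by_contra! hjl
    exact ha i j hij hjl ⟨val_mem_configSupport.mp hi, val_mem_configSupport.mp hj⟩

theorem configSupport_decide_mem {S : Finset ℕ} (hS : ∀ i ∈ S, i < n) :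
    configSupport (fun i : Fin n => decide ((i : ℕ) ∈ S)) = S := by
  ext k
  by_cases hk : k < n
  · lift k to Fin n using hk
    simp [val_mem_configSupport]
  · exact iff_of_false (mt lt_of_mem_configSupport hk) (mt (hS k) hk)

theorem sum_fibSet_configSupport {M : Type*} [AddCommMonoid M] (f : Finset ℕ → M) (l n : ℕ) :
    ∑ a ∈ fibSet l n, f (configSupport a) = ∑ S ∈ sparseSubsets l n, f S := by
  have support_decide {S : Finset ℕ} (hS : S ∈ sparseSubsets l n) :
      configSupport (fun i : Fin n => decide ((i : ℕ) ∈ S)) = S :=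
    configSupport_decide_mem (mem_sparseSubsets.mp hS).1
  refine sum_nbij' configSupport (fun S i => decide ((i : ℕ) ∈ S))
    (fun a ha => configSupport_mem_sparseSubsets.mpr ha)
    (fun S hS => configSupport_mem_sparseSubsets.mp ((support_decide hS).symm ▸ hS))
    (fun a _ => ?_) (fun S hS => support_decide hS) (fun a _ => rfl)
  simp [val_mem_configSupport]

end Support

section WeightedCharacter

variable {R : Type*} [CommSemiring R]

/-- The character of the Fibonacci-`l` configurations on `n` points with an arbitrary weight `w i`
for each occupied site `i`; the character `χ^l_n(z,q)` is the case `w i = z * q ^ i`. -/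
def weightedFibChar (w : ℕ → R) (l n : ℕ) : R :=
  ∑ a ∈ fibSet l n, ∏ i with a i = true, w i

theorem fibChar_eq_weightedFibChar (l n : ℕ) :
    fibChar l n = weightedFibChar (fun i => X 0 * X 1 ^ i) l n := by
  simp only [fibChar, weightedFibChar, prod_mul_distrib, prod_const, prod_pow_eq_pow_sum]

theorem weightedFibChar_eq_sum_sparseSubsets (w : ℕ → R) (l n : ℕ) :
    weightedFibChar w l n = ∑ S ∈ sparseSubsets l n, ∏ i ∈ S, w i := by
  simp [weightedFibChar, ← sum_fibSet_configSupport, configSupport]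

theorem fibChar_recurrence_general (w : ℕ → R) {l n : ℕ} (h : l ≤ n) :
    weightedFibChar w l (n + 1) = weightedFibChar w l n + w n * weightedFibChar w l (n - l) := by
  obtain ⟨m, rfl⟩ := Nat.exists_eq_add_of_le' h
  have prod_insert_last {S : Finset ℕ} (hS : S ∈ sparseSubsets l m) :
      ∏ i ∈ insert (m + l) S, w i = w (m + l) * ∏ i ∈ S, w i :=
    prod_insert fun hmem => (Nat.le_add_right m l).not_gt ((mem_sparseSubsets.mp hS).1 _ hmem)
  simp only [weightedFibChar_eq_sum_sparseSubsets, Nat.add_sub_cancel]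
  rw [sum_sparseSubsets_succ, sum_congr rfl fun S hS => prod_insert_last hS, mul_sum]

end WeightedCharacter

/-- For `l ≥ 0` and `n ≥ l`, the recurrence
`χ^l_{n+1}(z,q) = χ^l_n(z,q) + z·q^n·χ^l_{n-l}(z,q)` holds in `ℤ[z,q]`. -/
theorem fibChar_recurrence (l n : ℕ) (h : l ≤ n) :
    fibChar l (n + 1) =
      fibChar l n + MvPolynomial.X 0 * MvPolynomial.X 1 ^ n * fibChar l (n - l) := by
  simpa only [fibChar_eq_weightedFibChar] using fibChar_recurrence_general _ h
end

section
/- For all integers n ≥ 1 and m ≥ 0, the following identity holds in ℤ[[q]]: Σ_{j=0}^{m-1} q^{nj} (q)_{n-1}^{-1} (q)_j^{-1} + q^{nm} (q)_n^{-1} (q)_m^{-1} = Σ_{j=0}^{m} q^{(n+1)j} (q)_n^{-1} (q)_j^{-1}. -/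
/-!
The series `e(x) = ∑ⱼ xʲ (q)_j⁻¹` satisfies `(1 - x) e(x) = e(q x)`, because
`(q)_j⁻¹ - (q)_{j-1}⁻¹ = q ^ j (q)_j⁻¹`. Summation by parts up to `m` gives the same equation for
the partial sums, with the boundary term `x ^ m (q)_m⁻¹`. Specializing to `x = q ^ n` and dividing
by `(q)_n` gives the identity, since `(1 - q ^ n) (q)_n⁻¹ = (q)_{n-1}⁻¹`.
-/

open PowerSeries

/-- `(q)_n = ∏_{i=1}^{n} (1 - q^i)` in `ℤ[[q]]`. -/
noncomputable def qPoch (n : ℕ) : PowerSeries ℤ :=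
  ∏ i ∈ Finset.range n, (1 - (PowerSeries.X : PowerSeries ℤ) ^ (i + 1))

theorem qPoch_succ (n : ℕ) : qPoch (n + 1) = qPoch n * (1 - X ^ (n + 1)) :=
  Finset.prod_range_succ _ n

theorem isUnit_qPoch (n : ℕ) : IsUnit (qPoch n) := by
  simp [PowerSeries.isUnit_iff_constantCoeff, qPoch]

theorem inverse_qPoch_eq_mul_inverse_succ (n : ℕ) :
    Ring.inverse (qPoch n) = (1 - X ^ (n + 1)) * Ring.inverse (qPoch (n + 1)) := by
  rw [Ring.eq_mul_inverse_iff_mul_eq _ _ _ (isUnit_qPoch (n + 1)), qPoch_succ,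
    Ring.inverse_mul_cancel_left _ _ (isUnit_qPoch n)]

theorem one_sub_mul_sum_range_pow_mul_add {R : Type*} [CommRing R] {q : R} {c : ℕ → R}
    (hc : ∀ j, c j = (1 - q ^ (j + 1)) * c (j + 1)) (x : R) (m : ℕ) :
    (1 - x) * ∑ j ∈ Finset.range m, x ^ j * c j + x ^ m * c m =
      ∑ j ∈ Finset.range (m + 1), (q * x) ^ j * c j := by
  induction m with
  | zero => simp
  | succ m ih =>
    rw [Finset.sum_range_succ _ (m + 1), ← ih, Finset.sum_range_succ]
    linear_combination -x ^ (m + 1) * hc m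

/-- For all `n ≥ 1` and `m ≥ 0`, in `ℤ[[q]]`:
`Σ_{j=0}^{m-1} q^{nj} (q)_{n-1}⁻¹ (q)_j⁻¹ + q^{nm} (q)_n⁻¹ (q)_m⁻¹
  = Σ_{j=0}^{m} q^{(n+1)j} (q)_n⁻¹ (q)_j⁻¹`. -/
theorem rectangle_complement_identity (n m : ℕ) (hn : 1 ≤ n) :
    (∑ j ∈ Finset.range m,
      (PowerSeries.X : PowerSeries ℤ) ^ (n * j) *
        Ring.inverse (qPoch (n - 1)) * Ring.inverse (qPoch j)) +
      (PowerSeries.X : PowerSeries ℤ) ^ (n * m) *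
        Ring.inverse (qPoch n) * Ring.inverse (qPoch m) =
    ∑ j ∈ Finset.range (m + 1),
      (PowerSeries.X : PowerSeries ℤ) ^ ((n + 1) * j) *
        Ring.inverse (qPoch n) * Ring.inverse (qPoch j) := by
  obtain ⟨k, rfl⟩ := Nat.exists_eq_add_of_le' hn
  rw [Nat.add_sub_cancel, inverse_qPoch_eq_mul_inverse_succ k]
  calc
    _ = Ring.inverse (qPoch (k + 1)) *
          ((1 - X ^ (k + 1)) * ∑ j ∈ Finset.range m, (X ^ (k + 1)) ^ j * Ring.inverse (qPoch j) +
            (X ^ (k + 1)) ^ m * Ring.inverse (qPoch m)) := by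
      simp only [mul_add, Finset.mul_sum, pow_mul]
      congr 1
      · exact Finset.sum_congr rfl fun j _ ↦ by ring
      · ring
    _ = Ring.inverse (qPoch (k + 1)) *
          ∑ j ∈ Finset.range (m + 1), (X * X ^ (k + 1)) ^ j * Ring.inverse (qPoch j) := by
      rw [one_sub_mul_sum_range_pow_mul_add inverse_qPoch_eq_mul_inverse_succ]
    _ = _ := by
      simp only [Finset.mul_sum, ← pow_succ', pow_mul]
      exact Finset.sum_congr rfl fun j _ ↦ by ring
end

section
/- Let l ≥ θ ≥ 0 be integers. For every c ∈ ℤ and E ∈ ℤ, the set of infinite Fibonacci configurations a ∈ Fib_∞^{(θ,l)} with charge c and energy E is finite, and its cardinality equals p(E - θc - (l+1)c(c-1)/2), the number of partitions of the integer E - θc - (l+1)c(c-1)/2 (which is zero when this integer is negative). -/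
/-- An infinite Fibonacci configuration of type `(θ, l)` (for `l ≥ θ ≥ 0`): a
function `a : ℤ → {0,1}` (encoded as `ℤ → Bool`) such that
(1) any window of `l+1` consecutive integers carries at most one `1`;
(2) `a i = 0` for all sufficiently large `i`;
(3) for all sufficiently negative `i`, `a i = 1` iff `i ≡ θ (mod l+1)`. -/
def IsFibConfig (θ l : ℕ) (a : ℤ → Bool) : Prop :=
  (∀ i j : ℤ, i < j → j ≤ i + l → ¬(a i = true ∧ a j = true)) ∧
  (∃ M : ℤ, ∀ i : ℤ, M ≤ i → a i = false) ∧
  (∃ M : ℤ, ∀ i : ℤ, i ≤ M → (a i = true ↔ ((l : ℤ) + 1) ∣ (i - (θ : ℤ))))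

/-- The vacuum configuration `Vac_{(θ,l)}`: it takes the value `1` exactly at the
integers `θ - (l+1)k` for integers `k ≥ 1`, i.e. at integers `i ≤ θ - (l+1)` with
`i ≡ θ (mod l+1)`. -/
def vacConfig (θ l : ℕ) (i : ℤ) : Bool :=
  decide (i ≤ (θ : ℤ) - ((l : ℤ) + 1) ∧ ((l : ℤ) + 1) ∣ (i - (θ : ℤ)))

/-- The pointwise difference `b = a - Vac_{(θ,l)} : ℤ → {-1,0,1}`. -/
def diffVac (θ l : ℕ) (a : ℤ → Bool) (i : ℤ) : ℤ :=
  (if a i = true then 1 else 0) - (if vacConfig θ l i = true then 1 else 0)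

/-- The charge `Σ_{i∈ℤ} b_i` of a configuration `a`, where `b = a - Vac_{(θ,l)}`
(a finitely supported function, so the sum is finite). -/
noncomputable def charge (θ l : ℕ) (a : ℤ → Bool) : ℤ :=
  ∑ᶠ i : ℤ, diffVac θ l a i

/-- The energy `Σ_{i∈ℤ} i·b_i` of a configuration `a`, where `b = a - Vac_{(θ,l)}`. -/
noncomputable def energy (θ l : ℕ) (a : ℤ → Bool) : ℤ :=
  ∑ᶠ i : ℤ, i * diffVac θ l a i

/-! The ones of a configuration, read from right to left, are at positions `s 0 > s 1 > ⋯` with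
consecutive gaps at least `l + 1`; far to the left every gap is `l + 1` and every position is
congruent to `θ`. So there is a unique `c` with `s k = θ + (l + 1) (c - 1 - k)` for large `k`, and
the displacements `f k = s k - (θ + (l + 1) (c - 1 - k))` decrease to `0`: they are the parts of a
partition. Every pair `(c, f)` arises in this way, the vacuum being `(0, 0)`. If `m - n = c` and
`m` is large, then the configuration without its `m` rightmost ones coincides with the vacuum
without its `n` rightmost ones, so that charge and energy are differences of two finite sums. The
charge is therefore `m - n = c`, and the energy is `θ c + (l + 1) c (c - 1) / 2 + ∑ f k`. -/

section NonzeroValues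

variable {α M : Type*}

/-- The multiset of nonzero values of a finitely supported function. A partition is encoded by the
antitone `f : ℕ →₀ ℕ` whose nonzero values, with multiplicity, are its parts. -/
def nonzeroValues [Zero M] (f : α →₀ M) : Multiset M :=
  f.support.val.map f

theorem ne_zero_of_mem_nonzeroValues [Zero M] {f : α →₀ M} {x : M} (hx : x ∈ nonzeroValues f) :
    x ≠ 0 := by
  obtain ⟨i, hi, rfl⟩ := Multiset.mem_map.1 hx
  exact Finsupp.mem_support_iff.1 hi

theorem sum_nonzeroValues [AddCommMonoid M] (f : α →₀ M) : (nonzeroValues f).sum = f.degree :=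
  rfl

theorem countP_nonzeroValues [Zero M] (f : α →₀ M) (p : M → Prop) [DecidablePred p] :
    (nonzeroValues f).countP p = {i ∈ f.support | p (f i)}.card := by
  rw [nonzeroValues, Multiset.countP_map, Finset.card, Finset.filter_val]

theorem nonzeroValues_toFinsupp [Zero M] [DecidableEq M] {L : List M} (hL : 0 ∉ L) :
    nonzeroValues L.toFinsupp = L := by
  have hsupp : L.toFinsupp.support = Finset.range L.length := by
    refine L.toFinsupp_support_subset.antisymm fun i hi ↦ Finsupp.mem_support_iff.2 ?_
    rw [List.toFinsupp_apply_lt _ _ (Finset.mem_range.1 hi)]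
    exact ne_of_mem_of_not_mem (List.getElem_mem _) hL
  have hmap : (List.range L.length).map L.toFinsupp = L := by
    refine List.ext_getElem (by simp) fun i _ hi ↦ ?_
    rw [List.getElem_map, List.getElem_range, List.toFinsupp_apply_lt]
  rw [nonzeroValues, hsupp, Finset.range_val, Multiset.range, Multiset.map_coe, hmap]

variable [AddZeroClass M] [LinearOrder M] [CanonicallyOrderedAdd M]

theorem lt_apply_iff_lt_card_of_antitone {f : ℕ →₀ M} (hf : Antitone f) {t : M} {k : ℕ} :
    t < f k ↔ k < {i ∈ f.support | t < f i}.card := by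
  constructor
  · intro ht
    have hsub : Finset.range (k + 1) ⊆ {i ∈ f.support | t < f i} := fun i hi ↦ by
      have hti : t < f i := ht.trans_le (hf (Finset.mem_range_succ_iff.1 hi))
      simp [hti, (pos_of_gt hti).ne']
    simpa using Finset.card_le_card hsub
  · contrapose!
    intro ht
    have hsub : {i ∈ f.support | t < f i} ⊆ Finset.range k := fun i hi ↦
      Finset.mem_range.2 <| hf.reflect_lt <| ht.trans_lt (Finset.mem_filter.1 hi).2
    simpa using Finset.card_le_card hsub

theorem nonzeroValues_injOn_antitone :
    Set.InjOn nonzeroValues {f : ℕ →₀ M | Antitone f} := by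
  intro f hf g hg hfg
  ext k
  refine eq_of_forall_lt_iff fun t ↦ ?_
  rw [lt_apply_iff_lt_card_of_antitone hf, lt_apply_iff_lt_card_of_antitone hg,
    ← countP_nonzeroValues, ← countP_nonzeroValues, hfg]

theorem antitone_toFinsupp {L : List M} (hL : L.SortedGE) : Antitone L.toFinsupp := by
  intro i j hij
  obtain hj | hj := lt_or_ge j L.length
  · rw [List.toFinsupp_apply_lt _ _ hj, List.toFinsupp_apply_lt _ _ (hij.trans_lt hj)]
    exact hL.getElem_ge_getElem_of_le hij
  · rw [List.toFinsupp_apply_le _ _ hj]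
    exact zero_le

theorem exists_antitone_nonzeroValues_eq {s : Multiset M} (hs : 0 ∉ s) :
    ∃ f : ℕ →₀ M, Antitone f ∧ nonzeroValues f = s := by
  refine ⟨(s.sort (· ≥ ·)).toFinsupp, antitone_toFinsupp (s.pairwise_sort _).sortedGE, ?_⟩
  rw [nonzeroValues_toFinsupp (by simpa using hs), Multiset.sort_eq]

end NonzeroValues

/-- The correspondence between antitone sequences of sum `n` and partitions of `n`. -/
noncomputable def antitoneEquivPartition (n : ℕ) :
    {f : ℕ →₀ ℕ | Antitone f ∧ f.degree = n} ≃ n.Partition :=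
  Equiv.ofBijective
    (fun f ↦ ⟨nonzeroValues f.1, fun hi ↦ Nat.pos_of_ne_zero (ne_zero_of_mem_nonzeroValues hi),
      (sum_nonzeroValues f.1).trans f.2.2⟩) <| by
    constructor
    · intro f g hfg
      exact Subtype.ext <|
        nonzeroValues_injOn_antitone f.2.1 g.2.1 (congrArg Nat.Partition.parts hfg)
    · intro p
      obtain ⟨f, hf, hfp⟩ :=
        exists_antitone_nonzeroValues_eq fun h0 ↦ (p.parts_pos h0).ne rfl
      exact ⟨⟨f, hf, by rw [← sum_nonzeroValues, hfp, p.parts_sum]⟩, Nat.Partition.ext hfp⟩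

theorem finite_setOf_antitone_degree_eq (N : ℤ) :
    {f : ℕ →₀ ℕ | Antitone f ∧ (f.degree : ℤ) = N}.Finite := by
  refine Set.Finite.subset (s := {f : ℕ →₀ ℕ | Antitone f ∧ f.degree = N.toNat})
    (Finite.of_equiv _ (antitoneEquivPartition N.toNat).symm) fun f hf ↦ ⟨hf.1, ?_⟩
  rw [← hf.2, Int.toNat_natCast]

theorem ncard_setOf_antitone_degree_eq (N : ℤ) :
    {f : ℕ →₀ ℕ | Antitone f ∧ (f.degree : ℤ) = N}.ncard =
      if 0 ≤ N then Fintype.card (Nat.Partition N.toNat) else 0 := by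
  split_ifs with hN
  · lift N to ℕ using hN
    simp only [Nat.cast_inj, Int.toNat_natCast]
    rw [← Nat.card_coe_set_eq, Nat.card_congr (antitoneEquivPartition N), Nat.card_eq_fintype_card]
  · rw [Set.ncard_eq_zero (finite_setOf_antitone_degree_eq N), Set.eq_empty_iff_forall_notMem]
    rintro f ⟨-, rfl⟩
    exact hN (Int.natCast_nonneg _)

theorem exists_strictAnti_range_eq {S : Set ℤ} (hS : BddAbove S) (hS' : ¬BddBelow S) :
    ∃ s : ℕ → ℤ, StrictAnti s ∧ Set.range s = S := by
  classical
  obtain ⟨B, hB⟩ := hS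
  let T : Set ℕ := {n | B - n ∈ S}
  have hST : (fun n : ℕ ↦ B - n) '' T = S := by
    refine Set.image_preimage_eq_of_subset fun i hi ↦ ⟨(B - i).toNat, ?_⟩
    have := hB hi
    grind
  have : Infinite T := by
    refine Set.infinite_coe_iff.2 fun hT ↦ hS' ?_
    exact hST ▸ (hT.image _).bddBelow
  refine ⟨fun k ↦ B - Nat.orderEmbeddingOfSet T k, fun j k hjk ↦ ?_, ?_⟩
  · have := (Nat.orderEmbeddingOfSet T).strictMono hjk
    grind
  · rw [Set.range_comp' (fun n : ℕ ↦ B - n), Nat.orderEmbeddingOfSet_range, hST]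

section FinsumRange

variable {α M : Type*} {s t : ℕ → α}

theorem indicator_range_eq_add [AddZeroClass M] (hs : s.Injective) (m : ℕ) (g : α → M) :
    (Set.range s).indicator g =
      (s '' Finset.range m).indicator g + (Set.range fun j ↦ s (m + j)).indicator g := by
  have hrange : (Set.range fun j ↦ m + j) = (Finset.range m : Set ℕ)ᶜ := by
    ext k
    simp [le_iff_exists_add, eq_comm]
  rw [Set.range_comp' s (m + ·), hrange, ← Set.image_univ,
    ← Set.union_compl_self (Finset.range m : Set ℕ), Set.image_union]
  exact Set.indicator_union_of_disjoint ((Set.disjoint_image_iff hs).2 disjoint_compl_right) g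

theorem finsum_indicator_image {ι : Type*} [AddCommMonoid M] {s : ι → α} (hs : s.Injective)
    (S : Finset ι) (g : α → M) : ∑ᶠ i, (s '' S).indicator g i = ∑ k ∈ S, g (s k) := by
  rw [← finsum_mem_def, finsum_mem_image hs.injOn, finsum_mem_coe_finset]

theorem finsum_indicator_range_sub_indicator_range [AddCommGroup M] (hs : s.Injective)
    (ht : t.Injective) {m n : ℕ} (hst : ∀ j, s (m + j) = t (n + j)) (g : α → M) :
    ∑ᶠ i, ((Set.range s).indicator g i - (Set.range t).indicator g i) =
      ∑ k ∈ Finset.range m, g (s k) - ∑ k ∈ Finset.range n, g (t k) := by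
  rw [indicator_range_eq_add hs m, indicator_range_eq_add ht n, funext hst]
  simp only [Pi.add_apply, add_sub_add_right_eq_sub]
  rw [finsum_sub_distrib, finsum_indicator_image hs, finsum_indicator_image ht]
  all_goals exact ((Finset.finite_toSet _).image _).subset Set.support_indicator_subset

end FinsumRange

theorem two_mul_sum_range_sub {R : Type*} [CommRing R] (x : R) (m : ℕ) :
    2 * ∑ k ∈ Finset.range m, (x - k) = m * (2 * x + 1 - m) := by
  induction m with
  | zero => simp
  | succ m ih =>
    rw [Finset.sum_range_succ, mul_add, ih]
    push_cast
    ring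

theorem sum_range_sub_sum_range_eq_ediv_two {c : ℤ} {m n : ℕ} (hmn : (m : ℤ) - n = c) :
    ∑ k ∈ Finset.range m, (c - 1 - k) - ∑ k ∈ Finset.range n, (-1 - (k : ℤ)) =
      c * (c - 1) / 2 := by
  refine (Int.ediv_eq_of_eq_mul_right two_ne_zero ?_).symm
  rw [mul_sub 2, two_mul_sum_range_sub, two_mul_sum_range_sub, ← hmn]
  ring

theorem apply_eq_zero_of_support_subset_range {M : Type*} [Zero M] {f : ℕ →₀ M} {m k : ℕ}
    (hf : f.support ⊆ Finset.range m) (hk : m ≤ k) : f k = 0 :=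
  Finsupp.notMem_support_iff.1 fun h ↦ hk.not_gt (Finset.mem_range.1 (hf h))

theorem sum_range_eq_degree {M : Type*} [AddCommMonoid M] {f : ℕ →₀ M} {m : ℕ}
    (hf : f.support ⊆ Finset.range m) : ∑ k ∈ Finset.range m, f k = f.degree :=
  (Finset.sum_subset hf fun _ _ hk ↦ Finsupp.notMem_support_iff.1 hk).symm

theorem exists_sub_eq_and_support_subset_range {M : Type*} [Zero M] (f : ℕ →₀ M) (c : ℤ) :
    ∃ m n : ℕ, (m : ℤ) - n = c ∧ f.support ⊆ Finset.range m := by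
  obtain ⟨K, hK⟩ := f.support.exists_nat_subset_range
  exact ⟨K + c.toNat, K + (-c).toNat, by lia, hK.trans (Finset.range_subset_range.2 (by lia))⟩

section FibConfig

variable (θ l : ℕ) (c : ℤ)

/-- The position of the `k`-th one, counted from the right starting at `k = 0`, of the
configuration of charge `c` attached to `f`: the vacuum shifted to charge `c` has its `k`-th one at
`θ + (l + 1) (c - 1 - k)`, and `f k` is the displacement from there. -/
def fibPos (f : ℕ → ℕ) (k : ℕ) : ℤ :=
  θ + (l + 1) * (c - 1 - k) + f k

open Classical in
/-- The configuration whose ones are at the positions `fibPos θ l c f k`. -/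
noncomputable def fibConfig (f : ℕ → ℕ) (i : ℤ) : Bool :=
  decide (i ∈ Set.range (fibPos θ l c f))

variable {θ l c}

theorem fibConfig_eq_true_iff {f : ℕ → ℕ} {i : ℤ} :
    fibConfig θ l c f i = true ↔ i ∈ Set.range (fibPos θ l c f) := by
  classical exact decide_eq_true_iff

theorem fibConfig_zero : fibConfig θ l 0 0 = vacConfig θ l := by
  ext i
  rw [Bool.eq_iff_iff, fibConfig_eq_true_iff, vacConfig, decide_eq_true_iff]
  constructor
  · rintro ⟨k, rfl⟩
    refine ⟨?_, -1 - k, ?_⟩ <;> simp only [fibPos, Pi.zero_apply]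
    · push_cast
      nlinarith
    · push_cast
      ring
  · rintro ⟨hi, t, ht⟩
    have htneg : t < 0 := by nlinarith
    refine ⟨(-1 - t).toNat, ?_⟩
    rw [fibPos, Int.toNat_of_nonneg (by lia)]
    push_cast [Pi.zero_apply]
    linarith

theorem fibPos_add_le_of_lt {f : ℕ → ℕ} (hf : Antitone f) {j k : ℕ} (hjk : j < k) :
    fibPos θ l c f k + (l + 1) ≤ fibPos θ l c f j := by
  have hfjk : (f k : ℤ) ≤ f j := Nat.cast_le.2 (hf hjk.le)
  have hshift : (l + 1 : ℤ) * (c - 1 - k) + (l + 1) ≤ (l + 1) * (c - 1 - j) := by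
    rw [← mul_add_one]
    exact mul_le_mul_of_nonneg_left (by lia) (by positivity)
  unfold fibPos
  linarith

theorem fibPos_strictAnti {f : ℕ → ℕ} (hf : Antitone f) : StrictAnti (fibPos θ l c f) :=
  fun _ _ hjk ↦ (lt_add_of_pos_right _ (by positivity)).trans_le (fibPos_add_le_of_lt hf hjk)

theorem fibConfig_injOn_antitone : Set.InjOn (fibConfig θ l c) {f | Antitone f} := by
  intro f hf g hg hfg
  have hrange : Set.range (fibPos θ l c f) = Set.range (fibPos θ l c g) := by
    ext i
    rw [← fibConfig_eq_true_iff, hfg, fibConfig_eq_true_iff]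
  have hpos : fibPos θ l c f = fibPos θ l c g :=
    (StrictMono.range_inj (γ := ℤᵒᵈ) (fibPos_strictAnti hf).dual_right
      (fibPos_strictAnti hg).dual_right).1 hrange
  ext k
  simpa [fibPos] using congrFun hpos k

theorem isFibConfig_fibConfig {f : ℕ →₀ ℕ} (hf : Antitone f) :
    IsFibConfig θ l (fibConfig θ l c f) := by
  obtain ⟨K, hK⟩ := f.support.exists_nat_subset_range
  have hfK {k : ℕ} (hk : K ≤ k) : f k = 0 := apply_eq_zero_of_support_subset_range hK hk
  simp only [IsFibConfig, ← Bool.not_eq_true, fibConfig_eq_true_iff]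
  refine ⟨?_, ⟨fibPos θ l c f 0 + 1, ?_⟩, ⟨fibPos θ l c f K, ?_⟩⟩
  · rintro _ _ hij hji ⟨⟨k, rfl⟩, ⟨j, rfl⟩⟩
    have hgap := fibPos_add_le_of_lt (θ := θ) (l := l) (c := c) hf
      ((fibPos_strictAnti hf).lt_iff_gt.1 hij)
    linarith
  · rintro _ hi ⟨k, rfl⟩
    linarith [(fibPos_strictAnti (θ := θ) (l := l) (c := c) hf).antitone k.zero_le]
  · intro i hi
    constructor
    · rintro ⟨k, rfl⟩
      have hk : K ≤ k := (fibPos_strictAnti hf).le_iff_ge.1 hi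
      exact ⟨c - 1 - k, by rw [fibPos, hfK hk]; push_cast; ring⟩
    · rintro ⟨t, ht⟩
      have htK : t ≤ c - 1 - K := by
        rw [fibPos, hfK le_rfl] at hi
        push_cast at hi
        nlinarith
      refine ⟨(c - 1 - t).toNat, ?_⟩
      rw [fibPos, hfK (by lia), Int.toNat_of_nonneg (by lia)]
      push_cast
      linarith

theorem mul_diffVac_fibConfig (f : ℕ → ℕ) (g : ℤ → ℤ) (i : ℤ) :
    g i * diffVac θ l (fibConfig θ l c f) i =
      (Set.range (fibPos θ l c f)).indicator g i - (Set.range (fibPos θ l 0 0)).indicator g i := by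
  classical
  simp only [diffVac, ← fibConfig_zero, fibConfig_eq_true_iff, Set.indicator_apply, mul_sub,
    mul_ite, mul_one, mul_zero]

theorem finsum_mul_diffVac_fibConfig {f : ℕ →₀ ℕ} (hf : Antitone f) {m n : ℕ}
    (hmn : (m : ℤ) - n = c) (hm : f.support ⊆ Finset.range m) (g : ℤ → ℤ) :
    ∑ᶠ i, g i * diffVac θ l (fibConfig θ l c f) i =
      ∑ k ∈ Finset.range m, g (fibPos θ l c f k) - ∑ k ∈ Finset.range n, g (fibPos θ l 0 0 k) := by
  have hzero : Antitone (0 : ℕ → ℕ) := antitone_const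
  simp only [mul_diffVac_fibConfig]
  refine finsum_indicator_range_sub_indicator_range (fibPos_strictAnti hf).injective
    (fibPos_strictAnti hzero).injective (fun j ↦ ?_) g
  rw [fibPos, fibPos, apply_eq_zero_of_support_subset_range hm (Nat.le_add_right m j), ← hmn]
  push_cast [Pi.zero_apply]
  ring

theorem charge_fibConfig {f : ℕ →₀ ℕ} (hf : Antitone f) : charge θ l (fibConfig θ l c f) = c := by
  obtain ⟨m, n, hmn, hm⟩ := exists_sub_eq_and_support_subset_range f c
  simpa [charge, hmn] using finsum_mul_diffVac_fibConfig (θ := θ) (l := l) hf hmn hm 1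

theorem sum_fibPos (f : ℕ → ℕ) (m : ℕ) :
    ∑ k ∈ Finset.range m, fibPos θ l c f k =
      θ * m + (l + 1) * ∑ k ∈ Finset.range m, (c - 1 - k) + ∑ k ∈ Finset.range m, (f k : ℤ) := by
  simp only [fibPos, Finset.sum_add_distrib, Finset.mul_sum, Finset.sum_const, Finset.card_range,
    nsmul_eq_mul, mul_comm (θ : ℤ)]

theorem energy_fibConfig {f : ℕ →₀ ℕ} (hf : Antitone f) :
    energy θ l (fibConfig θ l c f) = θ * c + (l + 1) * (c * (c - 1) / 2) + f.degree := by
  obtain ⟨m, n, hmn, hm⟩ := exists_sub_eq_and_support_subset_range f c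
  rw [energy, finsum_mul_diffVac_fibConfig hf hmn hm (fun i ↦ i), sum_fibPos, sum_fibPos,
    ← sum_range_eq_degree hm, ← sum_range_sub_sum_range_eq_ediv_two hmn, ← hmn]
  simp only [Pi.zero_apply, Nat.cast_zero, Finset.sum_const_zero, Nat.cast_sum, zero_sub]
  ring

theorem exists_fibPos_eq {s : ℕ → ℤ} {K : ℕ} (hgap : ∀ k, s (k + 1) + (l + 1) ≤ s k)
    (hstep : ∀ k, K ≤ k → s (k + 1) + (l + 1) = s k) (hK : (l + 1 : ℤ) ∣ s K - θ) :
    ∃ (c : ℤ) (f : ℕ →₀ ℕ), Antitone f ∧ fibPos θ l c f = s := by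
  obtain ⟨t, ht⟩ := hK
  let d : ℕ → ℤ := fun k ↦ s k - (θ + (l + 1) * (t + K - k))
  have hd_anti : Antitone d := antitone_nat_of_succ_le fun k ↦ by
    have := hgap k
    simp only [d]
    push_cast
    linarith
  have hd_zero {k : ℕ} (hk : K ≤ k) : d k = 0 := by
    induction k, hk using Nat.le_induction with
    | base =>
      simp only [d]
      linarith
    | succ k hk ih =>
      have := hstep k hk
      simp only [d] at ih ⊢
      push_cast
      linarith
  have hd_nonneg (k : ℕ) : 0 ≤ d k := by
    obtain hk | hk := le_total K k
    · exact (hd_zero hk).ge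
    · exact (hd_zero le_rfl).ge.trans (hd_anti hk)
  refine ⟨t + K + 1, .onFinset (Finset.range K) (fun k ↦ (d k).toNat) fun k hk ↦ ?_,
    fun j k hjk ↦ Int.toNat_le_toNat (hd_anti hjk), ?_⟩
  · by_contra hkK
    exact hk (by rw [hd_zero (by simpa using hkK), Int.toNat_zero])
  · ext k
    simp only [fibPos, Finsupp.onFinset_apply, Int.toNat_of_nonneg (hd_nonneg k), d]
    ring

theorem IsFibConfig.bddAbove {a : ℤ → Bool} (ha : IsFibConfig θ l a) :
    BddAbove {i | a i = true} := by
  obtain ⟨-, ⟨B, hB⟩, -⟩ := ha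
  refine ⟨B, fun i hi ↦ ?_⟩
  by_contra! hBi
  exact Bool.false_ne_true ((hB i hBi.le).symm.trans hi)

theorem IsFibConfig.not_bddBelow {a : ℤ → Bool} (ha : IsFibConfig θ l a) :
    ¬BddBelow {i | a i = true} := by
  obtain ⟨-, -, M, hM⟩ := ha
  rintro ⟨b, hb⟩
  let x := min M (b - 1)
  have hi : x - (x - θ) % (l + 1) ≤ x := sub_le_self _ (Int.emod_nonneg _ (by lia))
  have hdvd : (l + 1 : ℤ) ∣ x - (x - θ) % (l + 1) - θ := by
    rw [sub_right_comm]
    exact Int.dvd_self_sub_emod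
  have := hb ((hM _ (hi.trans (min_le_left _ _))).2 hdvd)
  lia

theorem IsFibConfig.exists_fibConfig_eq {a : ℤ → Bool} (ha : IsFibConfig θ l a) :
    ∃ (c : ℤ) (f : ℕ →₀ ℕ), Antitone f ∧ fibConfig θ l c f = a := by
  obtain ⟨s, hs, hrange⟩ := exists_strictAnti_range_eq ha.bddAbove ha.not_bddBelow
  have ⟨hsep, _, M, hM⟩ := ha
  obtain ⟨K, hK⟩ : ∃ K, s K ≤ M := by
    by_contra! h
    exact ha.not_bddBelow ⟨M, hrange ▸ Set.forall_mem_range.2 fun k ↦ (h k).le⟩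
  have hone (i : ℤ) : i ∈ Set.range s ↔ a i = true := Set.ext_iff.1 hrange i
  have hs_one (k : ℕ) : a (s k) = true := (hone _).1 ⟨k, rfl⟩
  have hgap (k : ℕ) : s (k + 1) + (l + 1) ≤ s k := by
    by_contra! h
    exact hsep _ _ (hs k.lt_succ_self) (by lia) ⟨hs_one _, hs_one _⟩
  have hdvd {k : ℕ} (hk : K ≤ k) : (l + 1 : ℤ) ∣ s k - θ :=
    (hM _ ((hs.antitone hk).trans hK)).1 (hs_one k)
  have hstep (k : ℕ) (hk : K ≤ k) : s (k + 1) + (l + 1) = s k := by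
    have hskM := (hs.antitone hk).trans hK
    have hnext : a (s k - (l + 1)) = true := by
      rw [hM _ (by lia), sub_right_comm]
      exact dvd_sub_self_right.2 (hdvd hk)
    obtain ⟨j, hj⟩ := (hone _).2 hnext
    have hkj : k + 1 ≤ j := hs.lt_iff_gt.1 (by lia)
    linarith [hs.antitone hkj, hgap k]
  obtain ⟨c, f, hf, hfs⟩ := exists_fibPos_eq hgap hstep (hdvd le_rfl)
  refine ⟨c, f, hf, funext fun i ↦ ?_⟩
  rw [Bool.eq_iff_iff, fibConfig_eq_true_iff, hfs, hone]

theorem setOf_isFibConfig_charge_energy_eq_image (θ l : ℕ) (c E : ℤ) :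
    {a : ℤ → Bool | IsFibConfig θ l a ∧ charge θ l a = c ∧ energy θ l a = E} =
      (fun f : ℕ →₀ ℕ ↦ fibConfig θ l c f) ''
        {f | Antitone f ∧ (f.degree : ℤ) = E - θ * c - (l + 1) * (c * (c - 1) / 2)} := by
  ext a
  constructor
  · rintro ⟨ha, rfl, rfl⟩
    obtain ⟨c, f, hf, rfl⟩ := ha.exists_fibConfig_eq
    rw [charge_fibConfig hf, energy_fibConfig hf]
    exact ⟨f, ⟨hf, by ring⟩, rfl⟩
  · rintro ⟨f, ⟨hf, hE⟩, rfl⟩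
    refine ⟨isFibConfig_fibConfig hf, charge_fibConfig hf, ?_⟩
    rw [energy_fibConfig hf, hE]
    ring

end FibConfig

theorem card_fibConfig_charge_energy_general (θ l : ℕ) (c E : ℤ) :
    {a : ℤ → Bool | IsFibConfig θ l a ∧ charge θ l a = c ∧ energy θ l a = E}.Finite ∧
    {a : ℤ → Bool | IsFibConfig θ l a ∧ charge θ l a = c ∧ energy θ l a = E}.ncard =
      (if 0 ≤ E - (θ : ℤ) * c - ((l : ℤ) + 1) * (c * (c - 1) / 2)
       then Fintype.card (Nat.Partition (E - (θ : ℤ) * c - ((l : ℤ) + 1) * (c * (c - 1) / 2)).toNat)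
       else 0) := by
  rw [setOf_isFibConfig_charge_energy_eq_image]
  refine ⟨(finite_setOf_antitone_degree_eq _).image _, ?_⟩
  rw [← ncard_setOf_antitone_degree_eq]
  refine Set.InjOn.ncard_image fun f hf g hg hfg ↦ ?_
  exact DFunLike.coe_injective (fibConfig_injOn_antitone hf.1 hg.1 hfg)

/-- For integers `l ≥ θ ≥ 0`, `c ∈ ℤ`, `E ∈ ℤ`: the set of infinite Fibonacci
configurations of type `(θ,l)` with charge `c` and energy `E` is finite, and its
cardinality equals `p(E - θc - (l+1)c(c-1)/2)`, the number of partitions of the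
integer `E - θc - (l+1)c(c-1)/2` (zero when this integer is negative). -/
theorem card_fibConfig_charge_energy (θ l : ℕ) (hθl : θ ≤ l) (c E : ℤ) :
    {a : ℤ → Bool | IsFibConfig θ l a ∧ charge θ l a = c ∧ energy θ l a = E}.Finite ∧
    {a : ℤ → Bool | IsFibConfig θ l a ∧ charge θ l a = c ∧ energy θ l a = E}.ncard =
      (if 0 ≤ E - (θ : ℤ) * c - ((l : ℤ) + 1) * (c * (c - 1) / 2)
       then Fintype.card (Nat.Partition (E - (θ : ℤ) * c - ((l : ℤ) + 1) * (c * (c - 1) / 2)).toNat)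
       else 0) :=
  card_fibConfig_charge_energy_general θ l c E
end
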